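/- arXiv:1008.4954 — 3 statements merged into one kernel-verified Lean document; each statement's English description precedes it below -/
import Mathlib

section
/- Let V be a real vector space with a direct sum decomposition V = V₊ ⊕ V₋, let J : V → V be a linear map with J ∘ J = -id that preserves both V₊ and V₋, and let J̃ : V → V be the linear map equal to -J on V₊ and equal to J on V₋. Let R : V × V × V × V → ℝ be a multilinear map satisfying the curvature symmetries R(x,y,z,u) = -R(y,x,z,u), R(x,y,z,u) = -R(x,y,u,z), R(x,y,z,u) = R(z,u,x,y), together with the Kähler invariance R(Jx,Jy,Jz,Ju) = R(x,y,z,u) for all x,y,z,u ∈ V. Then R(J̃x,J̃y,J̃z,J̃u) = R(x,y,z,u) holds for all x,y,z,u ∈ V if and only if both: (a) R(v₁,v₂,v₃,x) = 0 for all v₁,v₂,v₃ ∈ V₊ and x ∈ V₋, and (b) R(x,y,z,v) = 0 for all x,y,z ∈ V₋ and v ∈ V₊. -/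
/-!
Grade `V` by sign: `V₋` has sign `1` and `V₊` has sign `-1`, so that `J̃ v = s • J v` for `v` of
sign `s`. On vectors of signs `s₁, s₂, s₃, s₄` the invariance of `R` under `J` gives
`R(J̃x, J̃y, J̃z, J̃u) = (s₁ s₂ s₃ s₄) R(x, y, z, u)`. By multilinearity `R` is therefore invariant
under `J̃` exactly when it vanishes on every quadruple with sign product `-1`. In such a quadruple
one sign differs from the other three, and the curvature symmetries move the exceptional vector to
the last slot.
-/

section CurvatureTwist

variable {𝕜 V N : Type*} [CommRing 𝕜] [AddCommGroup V] [Module 𝕜 V] [AddCommGroup N] [Module 𝕜 N]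
  {R : V →ₗ[𝕜] V →ₗ[𝕜] V →ₗ[𝕜] V →ₗ[𝕜] N}

/-- A quadrilinear map with the algebraic symmetries of a curvature tensor other than the Bianchi
identity. Antisymmetry in the second pair of arguments is `IsCurvatureLike.antisymm_right`. -/
structure IsCurvatureLike (R : V →ₗ[𝕜] V →ₗ[𝕜] V →ₗ[𝕜] V →ₗ[𝕜] N) : Prop where
  antisymm_left : ∀ x y z u, R x y z u = -R y x z u
  pair_symm : ∀ x y z u, R x y z u = R z u x y

lemma IsCurvatureLike.antisymm_right (hR : IsCurvatureLike R) (x y z u : V) :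
    R x y z u = -R x y u z := by
  rw [hR.pair_symm, hR.antisymm_left, hR.pair_symm]

lemma linearMap_ext_of_iSup_eq_top {ι : Type*} {W : ι → Submodule 𝕜 V} (hW : ⨆ i, W i = ⊤)
    {f g : V →ₗ[𝕜] N} (h : ∀ i, ∀ v ∈ W i, f v = g v) : f = g :=
  LinearMap.ext_on (Submodule.iSup_eq_span W ▸ hW) fun v hv ↦
    let ⟨i, hi⟩ := Set.mem_iUnion.mp hv
    h i v hi

lemma quadrilinear_ext_of_iSup_eq_top {ι : Type*} {W : ι → Submodule 𝕜 V} (hW : ⨆ i, W i = ⊤)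
    {S : V →ₗ[𝕜] V →ₗ[𝕜] V →ₗ[𝕜] V →ₗ[𝕜] N}
    (h : ∀ i j k l, ∀ x ∈ W i, ∀ y ∈ W j, ∀ z ∈ W k, ∀ u ∈ W l, R x y z u = S x y z u) :
    R = S := by
  refine linearMap_ext_of_iSup_eq_top (N := V →ₗ[𝕜] V →ₗ[𝕜] V →ₗ[𝕜] N) hW fun i x hx ↦ ?_
  refine linearMap_ext_of_iSup_eq_top (N := V →ₗ[𝕜] V →ₗ[𝕜] N) hW fun j y hy ↦ ?_
  refine linearMap_ext_of_iSup_eq_top (N := V →ₗ[𝕜] N) hW fun k z hz ↦ ?_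
  exact linearMap_ext_of_iSup_eq_top hW fun l u hu ↦ h i j k l x hx y hy z hz u hu

lemma quadrilinear_units_smul (s₁ s₂ s₃ s₄ : ℤˣ) (x y z u : V) :
    R (s₁ • x) (s₂ • y) (s₃ • z) (s₄ • u) = (s₁ * s₂ * s₃ * s₄) • R x y z u := by
  simp only [LinearMap.map_smul_of_tower, LinearMap.smul_apply, smul_smul]

/-- The pullback of a quadrilinear map along `T` in all four arguments, bundled so that it
can be compared with other quadrilinear maps on spanning subspaces. -/
def quadrilinearPullback (T : V →ₗ[𝕜] V) (R : V →ₗ[𝕜] V →ₗ[𝕜] V →ₗ[𝕜] V →ₗ[𝕜] N) :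
    V →ₗ[𝕜] V →ₗ[𝕜] V →ₗ[𝕜] V →ₗ[𝕜] N :=
  (R.compl₁₂ T T).compr₂ (LinearMap.lcomp 𝕜 (V →ₗ[𝕜] N) T ∘ₗ
    LinearMap.compRight 𝕜 (LinearMap.lcomp 𝕜 N T))

lemma quadrilinearPullback_apply (T : V →ₗ[𝕜] V) (x y z u : V) :
    quadrilinearPullback T R x y z u = R (T x) (T y) (T z) (T u) :=
  rfl

/-- `R` vanishes on vectors whose signs multiply to `-1`, where the vectors of `W s` have
sign `s`. -/
def VanishesOnOddSigns (R : V →ₗ[𝕜] V →ₗ[𝕜] V →ₗ[𝕜] V →ₗ[𝕜] N) (W : ℤˣ → Submodule 𝕜 V) : Prop :=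
  ∀ s₁ s₂ s₃ s₄, s₁ * s₂ * s₃ * s₄ = -1 →
    ∀ x ∈ W s₁, ∀ y ∈ W s₂, ∀ z ∈ W s₃, ∀ u ∈ W s₄, R x y z u = 0

lemma twist_invariant_iff_vanishesOnOddSigns {W : ℤˣ → Submodule 𝕜 V} {J T : V →ₗ[𝕜] V}
    (hN : IsSMulRegular N (2 : ℕ)) (hW : ⨆ s, W s = ⊤) (hT : ∀ s, ∀ v ∈ W s, T v = s • J v)
    (hRJ : ∀ x y z u, R (J x) (J y) (J z) (J u) = R x y z u) :
    (∀ x y z u, R (T x) (T y) (T z) (T u) = R x y z u) ↔ VanishesOnOddSigns R W := by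
  have twist_apply {s₁ s₂ s₃ s₄ : ℤˣ} {x y z u : V}
      (hx : x ∈ W s₁) (hy : y ∈ W s₂) (hz : z ∈ W s₃) (hu : u ∈ W s₄) :
      R (T x) (T y) (T z) (T u) = (s₁ * s₂ * s₃ * s₄) • R x y z u := by
    rw [hT _ x hx, hT _ y hy, hT _ z hz, hT _ u hu, quadrilinear_units_smul, hRJ]
  constructor
  · intro h s₁ s₂ s₃ s₄ hs x hx y hy z hz u hu
    have eq_neg_self : R x y z u = -R x y z u := by
      simpa only [h, hs, Units.neg_smul, one_smul] using twist_apply hx hy hz hu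
    exact hN.right_eq_zero_of_smul ((two_nsmul _).trans (eq_neg_iff_add_eq_zero.mp eq_neg_self))
  · intro h
    suffices pullback_eq : quadrilinearPullback T R = R from fun x y z u ↦ by
      rw [← quadrilinearPullback_apply, pullback_eq]
    refine quadrilinear_ext_of_iSup_eq_top hW fun s₁ s₂ s₃ s₄ x hx y hy z hz u hu ↦ ?_
    rw [quadrilinearPullback_apply, twist_apply hx hy hz hu]
    rcases Int.units_eq_one_or (s₁ * s₂ * s₃ * s₄) with hs | hs
    · rw [hs, one_smul]
    · rw [h s₁ s₂ s₃ s₄ hs x hx y hy z hz u hu, smul_zero]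

lemma one_sign_differs_of_mul_eq_neg_one (s₁ s₂ s₃ s₄ : ℤˣ) (h : s₁ * s₂ * s₃ * s₄ = -1) :
    (s₂ = s₁ ∧ s₃ = s₁ ∧ s₄ = -s₁) ∨ (s₂ = s₁ ∧ s₃ = -s₁ ∧ s₄ = s₁) ∨
      (s₂ = -s₁ ∧ s₃ = s₁ ∧ s₄ = s₁) ∨ (s₁ = -s₂ ∧ s₃ = s₂ ∧ s₄ = s₂) := by
  rcases Int.units_eq_one_or s₁ with rfl | rfl <;> rcases Int.units_eq_one_or s₂ with rfl | rfl <;>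
    rcases Int.units_eq_one_or s₃ with rfl | rfl <;>
    rcases Int.units_eq_one_or s₄ with rfl | rfl <;> revert h <;> decide

lemma IsCurvatureLike.vanishesOnOddSigns_iff (hR : IsCurvatureLike R) {W : ℤˣ → Submodule 𝕜 V} :
    VanishesOnOddSigns R W ↔
      ∀ s, ∀ x ∈ W s, ∀ y ∈ W s, ∀ z ∈ W s, ∀ u ∈ W (-s), R x y z u = 0 := by
  refine ⟨fun h s ↦ h s s s (-s) (by simp), fun h s₁ s₂ s₃ s₄ hs x hx y hy z hz u hu ↦ ?_⟩
  rcases one_sign_differs_of_mul_eq_neg_one s₁ s₂ s₃ s₄ hs with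
    ⟨rfl, rfl, rfl⟩ | ⟨rfl, rfl, rfl⟩ | ⟨rfl, rfl, rfl⟩ | ⟨rfl, rfl, rfl⟩
  · exact h _ x hx y hy z hz u hu
  · rw [hR.antisymm_right, h _ x hx y hy u hu z hz, neg_zero]
  · rw [hR.pair_symm, h _ z hz u hu x hx y hy]
  · rw [hR.antisymm_left, hR.pair_symm, h _ z hz u hu y hy x hx, neg_zero]

/-- The two summands of `V = V₊ + V₋` indexed by the sign `s` for which the twist of `J` along `V₊`
is `s • J`; hence `V₊` has index `-1`. -/
def signedSummand (Vp Vm : Submodule 𝕜 V) (s : ℤˣ) : Submodule 𝕜 V :=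
  if s = 1 then Vm else Vp

lemma signedSummand_one (Vp Vm : Submodule 𝕜 V) : signedSummand Vp Vm 1 = Vm :=
  rfl

lemma signedSummand_neg_one (Vp Vm : Submodule 𝕜 V) : signedSummand Vp Vm (-1) = Vp :=
  rfl

lemma forall_int_units_iff {p : ℤˣ → Prop} : (∀ s, p s) ↔ p 1 ∧ p (-1) :=
  ⟨fun h ↦ ⟨h 1, h (-1)⟩, fun h s ↦ (Int.units_eq_one_or s).elim (· ▸ h.1) (· ▸ h.2)⟩

lemma iSup_signedSummand {Vp Vm : Submodule 𝕜 V} (h : Codisjoint Vp Vm) :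
    ⨆ s, signedSummand Vp Vm s = ⊤ :=
  top_unique <| h.eq_top.ge.trans <| sup_le
    ((signedSummand_neg_one Vp Vm).ge.trans (le_iSup _ (-1)))
    ((signedSummand_one Vp Vm).ge.trans (le_iSup _ 1))

theorem twisted_curvature_invariance_iff_general {Vp Vm : Submodule 𝕜 V} {J Jt : V →ₗ[𝕜] V}
    (hN : IsSMulRegular N (2 : ℕ)) (hV : Codisjoint Vp Vm)
    (hJtp : ∀ v ∈ Vp, Jt v = -J v) (hJtm : ∀ v ∈ Vm, Jt v = J v) (hR : IsCurvatureLike R)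
    (hRJ : ∀ x y z u, R (J x) (J y) (J z) (J u) = R x y z u) :
    (∀ x y z u, R (Jt x) (Jt y) (Jt z) (Jt u) = R x y z u) ↔
      (∀ v₁ ∈ Vp, ∀ v₂ ∈ Vp, ∀ v₃ ∈ Vp, ∀ x ∈ Vm, R v₁ v₂ v₃ x = 0) ∧
        (∀ x ∈ Vm, ∀ y ∈ Vm, ∀ z ∈ Vm, ∀ v ∈ Vp, R x y z v = 0) := by
  have twist : ∀ s, ∀ v ∈ signedSummand Vp Vm s, Jt v = s • J v := by
    simpa only [forall_int_units_iff, signedSummand_one, signedSummand_neg_one, one_smul,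
      Units.neg_smul] using ⟨hJtm, hJtp⟩
  rw [twist_invariant_iff_vanishesOnOddSigns hN (iSup_signedSummand hV) twist hRJ,
    hR.vanishesOnOddSigns_iff, forall_int_units_iff, neg_neg, signedSummand_one,
    signedSummand_neg_one, and_comm]

end CurvatureTwist

/-- Let `V = V₊ ⊕ V₋` be a real vector space, `J` a complex structure
preserving both summands, `Jt` the map equal to `-J` on `V₊` and to `J` on `V₋`, and `R`
a quadrilinear map with the curvature symmetries and Kähler invariance under `J`.
Then `R(Jt x, Jt y, Jt z, Jt u) = R(x,y,z,u)` for all vectors iff `R` vanishes whenever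
three arguments are in `V₊` and one in `V₋`, and whenever three arguments are in `V₋`
and one in `V₊`. -/
theorem twisted_curvature_invariance_iff
    {V : Type*} [AddCommGroup V] [Module ℝ V]
    (Vp Vm : Submodule ℝ V) (hcompl : IsCompl Vp Vm)
    (J Jt : V →ₗ[ℝ] V)
    (hJ2 : ∀ v : V, J (J v) = -v)
    (hJp : ∀ v ∈ Vp, J v ∈ Vp) (hJm : ∀ v ∈ Vm, J v ∈ Vm)
    (hJtp : ∀ v ∈ Vp, Jt v = -J v) (hJtm : ∀ v ∈ Vm, Jt v = J v)
    (R : V →ₗ[ℝ] V →ₗ[ℝ] V →ₗ[ℝ] V →ₗ[ℝ] ℝ)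
    (hR1 : ∀ x y z u : V, R x y z u = -R y x z u)
    (hR2 : ∀ x y z u : V, R x y z u = -R x y u z)
    (hR3 : ∀ x y z u : V, R x y z u = R z u x y)
    (hRJ : ∀ x y z u : V, R (J x) (J y) (J z) (J u) = R x y z u) :
    (∀ x y z u : V, R (Jt x) (Jt y) (Jt z) (Jt u) = R x y z u) ↔
      ((∀ v₁ ∈ Vp, ∀ v₂ ∈ Vp, ∀ v₃ ∈ Vp, ∀ x ∈ Vm, R v₁ v₂ v₃ x = 0) ∧
       (∀ x ∈ Vm, ∀ y ∈ Vm, ∀ z ∈ Vm, ∀ v ∈ Vp, R x y z v = 0)) :=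
  twisted_curvature_invariance_iff_general (.of_ne_zero two_ne_zero) hcompl.codisjoint hJtp hJtm
    ⟨hR1, hR3⟩ hRJ
end

section
/- Let V be a finite-dimensional real inner product space, let J : V → V be a linear isometric complex structure (J ∘ J = -id and ⟨Jx, Jy⟩ = ⟨x, y⟩ for all x, y), and let S : V → V be a symmetric linear map (⟨Sx, y⟩ = ⟨x, Sy⟩) with operator norm ‖S‖ < 1 that anticommutes with J (S ∘ J = -J ∘ S). Set A_S := (id + S) ∘ (id - S)⁻¹, J_S := (id - S) ∘ J ∘ (id - S)⁻¹, and g_S(x, y) := ⟨A_S x, y⟩. Then g_S(J_S x, y) = ⟨J x, y⟩ for all x, y ∈ V; that is, the fundamental two-form of the twisted pair (g_S, J_S) coincides with that of the original pair (⟨·,·⟩, J). -/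
open scoped RealInnerProductSpace

theorem semiconjBy_one_sub_one_add_of_anticommute {R : Type*} [NonAssocRing R] {j s : R}
    (hsj : s * j = -(j * s)) : SemiconjBy j (1 - s) (1 + s) := by
  have hneg : SemiconjBy j s (-s) := by
    rw [SemiconjBy, neg_mul, hsj, neg_neg]
  simpa only [sub_neg_eq_add] using (SemiconjBy.one_right j).sub_right hneg

theorem mul_inverse_mul_conj_of_semiconjBy {M : Type*} [MonoidWithZero M] {a x y : M}
    (hx : IsUnit x) (h : SemiconjBy a x y) :
    y * Ring.inverse x * (x * a * Ring.inverse x) = a := by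
  calc y * Ring.inverse x * (x * a * Ring.inverse x)
      = y * (Ring.inverse x * (x * (a * Ring.inverse x))) := by simp only [mul_assoc]
    _ = y * a * Ring.inverse x := by rw [Ring.inverse_mul_cancel_left _ _ hx, mul_assoc]
    _ = a * x * Ring.inverse x := by rw [h.eq]
    _ = a := Ring.mul_inverse_cancel_right _ _ hx

theorem twist_fundamental_two_form_unchanged_general
    {𝕜 V : Type*} [RCLike 𝕜] [SeminormedAddCommGroup V] [InnerProductSpace 𝕜 V]
    (J S : V →L[𝕜] V) (hS : IsUnit (1 - S)) (hSJ : S * J = -(J * S)) (x y : V) :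
    inner 𝕜 (((1 + S) * Ring.inverse (1 - S)) (((1 - S) * J * Ring.inverse (1 - S)) x)) y
      = inner 𝕜 (J x) y := by
  have hAJ : (1 + S) * Ring.inverse (1 - S) * ((1 - S) * J * Ring.inverse (1 - S)) = J :=
    mul_inverse_mul_conj_of_semiconjBy hS (semiconjBy_one_sub_one_add_of_anticommute hSJ)
  rw [← mul_apply_eq_comp, hAJ]

/-- With `J` an isometric complex structure and `S` a symmetric operator
with `‖S‖ < 1` anticommuting with `J`, setting `A_S = (1+S)(1-S)⁻¹`,
`J_S = (1-S) J (1-S)⁻¹` and `g_S(x,y) = ⟪A_S x, y⟫`, one has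
`g_S(J_S x, y) = ⟪J x, y⟫` for all `x, y`: the fundamental two-form is unchanged by
the twist. -/
theorem twist_fundamental_two_form_unchanged
    {V : Type*} [NormedAddCommGroup V] [InnerProductSpace ℝ V] [FiniteDimensional ℝ V]
    (J S : V →L[ℝ] V)
    (hJ2 : J * J = -1)
    (hJiso : ∀ x y : V, ⟪J x, J y⟫ = ⟪x, y⟫)
    (hSsymm : ∀ x y : V, ⟪S x, y⟫ = ⟪x, S y⟫)
    (hSnorm : ‖S‖ < 1)
    (hSJ : S * J = -(J * S)) :
    ∀ x y : V,
      ⟪((1 + S) * Ring.inverse (1 - S)) (((1 - S) * J * Ring.inverse (1 - S)) x), y⟫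
        = ⟪J x, y⟫ := by
  have : CompleteSpace V := FiniteDimensional.complete ℝ V
  exact twist_fundamental_two_form_unchanged_general J S
    (isUnit_one_sub_of_norm_lt_one hSnorm) hSJ
end

section
/- Let V be a finite-dimensional real inner product space, let J : V → V be a linear isometric complex structure (J ∘ J = -id and ⟨Jx, Jy⟩ = ⟨x, y⟩ for all x, y), and let S : V → V be a symmetric linear map (⟨Sx, y⟩ = ⟨x, Sy⟩) with operator norm ‖S‖ < 1 that anticommutes with J (S ∘ J = -J ∘ S). Set J_S := (id - S) ∘ J ∘ (id - S)⁻¹ and g_S(x, y) := ⟨(id + S)(id - S)⁻¹ x, y⟩. Then J_S is orthogonal with respect to g_S: g_S(J_S x, J_S y) = g_S(x, y) for all x, y ∈ V. -/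
open scoped RealInnerProductSpace

/-
Write `A = (1 + S)(1 - S)⁻¹` for the Cayley transform of `S`. Anticommutation turns `(1 ± S) J` into
`J (1 ∓ S)`, so that `J_S = J A` and `A J_S = J`. Since `A` is symmetric and `J` is isometric,
`⟪A J_S x, J_S y⟫ = ⟪J x, J A y⟫ = ⟪x, A y⟫ = ⟪A x, y⟫`.
-/

section Ring

variable {R : Type*} [Ring R] {j s : R}

/-- The Cayley transform `(1 + s)(1 - s)⁻¹`: for an operator `s`, the twist by `s` of an inner
product `g` is `g(cayleyTransform s ·, ·)`. As `Ring.inverse` is zero on non-units, it is zero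
unless `1 - s` is a unit. -/
noncomputable def cayleyTransform (s : R) : R :=
  (1 + s) * Ring.inverse (1 - s)

/-- The twist `(1 - s) j (1 - s)⁻¹` of an almost complex structure `j` by `s`. As `Ring.inverse` is
zero on non-units, it is zero unless `1 - s` is a unit. -/
noncomputable def twistedStructure (j s : R) : R :=
  (1 - s) * j * Ring.inverse (1 - s)

theorem one_add_mul_of_anticommute (h : s * j = -(j * s)) : (1 + s) * j = j * (1 - s) := by
  rw [add_mul, mul_sub, h, one_mul, mul_one, sub_eq_add_neg]

theorem one_sub_mul_of_anticommute (h : s * j = -(j * s)) : (1 - s) * j = j * (1 + s) := by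
  rw [sub_mul, mul_add, h, one_mul, mul_one, sub_neg_eq_add]

theorem twistedStructure_eq_mul_cayleyTransform (h : s * j = -(j * s)) :
    twistedStructure j s = j * cayleyTransform s := by
  rw [twistedStructure, cayleyTransform, one_sub_mul_of_anticommute h, mul_assoc]

theorem cayleyTransform_mul_twistedStructure (hs : IsUnit (1 - s)) (h : s * j = -(j * s)) :
    cayleyTransform s * twistedStructure j s = j :=
  calc
    cayleyTransform s * twistedStructure j s
        = (1 + s) * (Ring.inverse (1 - s) * ((1 - s) * (j * Ring.inverse (1 - s)))) := by
      simp only [cayleyTransform, twistedStructure, mul_assoc]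
    _ = (1 + s) * j * Ring.inverse (1 - s) := by
      rw [Ring.inverse_mul_cancel_left _ _ hs, mul_assoc]
    _ = j := by
      rw [one_add_mul_of_anticommute h, Ring.mul_inverse_cancel_right _ _ hs]

end Ring

theorem commute_ringInverse_right {M₀ : Type*} [MonoidWithZero M₀] {a b : M₀} (h : Commute a b) :
    Commute a (Ring.inverse b) := by
  by_cases hb : IsUnit b
  · obtain ⟨u, rfl⟩ := hb
    rw [Ring.inverse_unit]
    exact h.units_inv_right
  · rw [Ring.inverse_non_unit b hb]
    exact Commute.zero_right a

section InnerProductSpace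

variable {𝕜 E : Type*} [RCLike 𝕜] [SeminormedAddCommGroup E] [InnerProductSpace 𝕜 E]
  {J S T : E →L[𝕜] E}

theorem isSymmetric_ringInverse (hT : T.toLinearMap.IsSymmetric) :
    (Ring.inverse T).toLinearMap.IsSymmetric := by
  by_cases hunit : IsUnit T
  · intro x y
    have hcancel (z : E) : T (Ring.inverse T z) = z :=
      DFunLike.congr_fun (Ring.mul_inverse_cancel T hunit) z
    calc
      inner 𝕜 (Ring.inverse T x) y
          = inner 𝕜 (Ring.inverse T x) (T (Ring.inverse T y)) := by rw [hcancel]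
      _ = inner 𝕜 (T (Ring.inverse T x)) (Ring.inverse T y) := (hT _ _).symm
      _ = inner 𝕜 x (Ring.inverse T y) := by rw [hcancel]
  · rw [Ring.inverse_non_unit T hunit]
    exact LinearMap.IsSymmetric.zero

theorem isSymmetric_cayleyTransform (hS : S.toLinearMap.IsSymmetric) :
    (cayleyTransform S).toLinearMap.IsSymmetric := by
  have hadd : (1 + S).toLinearMap.IsSymmetric := LinearMap.IsSymmetric.one.add hS
  have hsub : (1 - S).toLinearMap.IsSymmetric := LinearMap.IsSymmetric.one.sub hS
  have hcomm : Commute (1 + S) (1 - S) :=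
    (Commute.one_left _).add_left ((Commute.one_right S).sub_right (Commute.refl S))
  exact hadd.mul_of_commute (isSymmetric_ringInverse hsub)
    ((commute_ringInverse_right hcomm).map ContinuousLinearMap.toLinearMapRingHom)

theorem twist_complex_structure_orthogonal_general
    (hJ : ∀ x y : E, inner 𝕜 (J x) (J y) = inner 𝕜 x y)
    (hS : S.toLinearMap.IsSymmetric) (hunit : IsUnit (1 - S)) (hSJ : S * J = -(J * S))
    (x y : E) :
    inner 𝕜 (cayleyTransform S (twistedStructure J S x)) (twistedStructure J S y)
      = inner 𝕜 (cayleyTransform S x) y :=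
  calc
    inner 𝕜 (cayleyTransform S (twistedStructure J S x)) (twistedStructure J S y)
        = inner 𝕜 (J x) (twistedStructure J S y) := by
      rw [← mul_apply_eq_comp, cayleyTransform_mul_twistedStructure hunit hSJ]
    _ = inner 𝕜 (J x) (J (cayleyTransform S y)) := by
      rw [twistedStructure_eq_mul_cayleyTransform hSJ, mul_apply_eq_comp]
    _ = inner 𝕜 x (cayleyTransform S y) := hJ _ _
    _ = inner 𝕜 (cayleyTransform S x) y := (isSymmetric_cayleyTransform hS x y).symm

end InnerProductSpace

/-- With `J` an isometric complex structure and `S` a symmetric operator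
with `‖S‖ < 1` anticommuting with `J`, setting `J_S = (1-S) J (1-S)⁻¹` and
`g_S(x,y) = ⟪(1+S)(1-S)⁻¹ x, y⟫`, the twisted structure `J_S` is orthogonal for `g_S`:
`g_S(J_S x, J_S y) = g_S(x, y)` for all `x, y`. -/
theorem twist_complex_structure_orthogonal
    {V : Type*} [NormedAddCommGroup V] [InnerProductSpace ℝ V] [FiniteDimensional ℝ V]
    (J S : V →L[ℝ] V)
    (hJ2 : J * J = -1)
    (hJiso : ∀ x y : V, ⟪J x, J y⟫ = ⟪x, y⟫)
    (hSsymm : ∀ x y : V, ⟪S x, y⟫ = ⟪x, S y⟫)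
    (hSnorm : ‖S‖ < 1)
    (hSJ : S * J = -(J * S)) :
    ∀ x y : V,
      ⟪((1 + S) * Ring.inverse (1 - S)) (((1 - S) * J * Ring.inverse (1 - S)) x),
          ((1 - S) * J * Ring.inverse (1 - S)) y⟫
        = ⟪((1 + S) * Ring.inverse (1 - S)) x, y⟫ := by
  have : CompleteSpace V := FiniteDimensional.complete ℝ V
  exact twist_complex_structure_orthogonal_general hJiso hSsymm
    (isUnit_one_sub_of_norm_lt_one hSnorm) hSJ
end
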